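/- In the critical-execution setting (a recoverable wait-free binary consensus algorithm for the n processes, a configuration C, an integer z ≥ 1, and α ∈ 𝓔*_z(C) critical with respect to 𝓔*_z(C)), every process is poised to apply an operation to the same object in Cα. -/

import Mathlib

namespace RecoverableConsensus

/-- A deterministic object type: a set of values, operations and responses together with a
transition function assigning to each (value, operation) pair a unique response and a unique
resulting value. -/
structure DetType : Type 1 where
  Value : Type
  Op : Type
  Resp : Type
  δ : Value → Op → Resp × Value

/-- A type is readable if it has a Read operation that returns (an injective encoding of)
the current value of the object without changing it. -/
def Readable (T : DetType) : Prop :=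
  ∃ (read : T.Op) (ι : T.Value → T.Resp),
    Function.Injective ι ∧ ∀ v, T.δ v read = (ι v, v)

/-- The register type over the value set `V`: the operation `none` is Read (returning the
current value without changing it) and `some v` is Write(v) (changing the value to `v`). -/
def RegisterType (V : Type) : DetType where
  Value := V
  Op := Option V
  Resp := V
  δ := fun u op =>
    match op with
    | none => (u, u)
    | some v => (v, v)

def IsRegister (T : DetType) : Prop := ∃ V : Type, T = RegisterType V

/-- An event is either a step by a process or a crash of a process. -/
inductive Event (n : ℕ) : Type where
  | step : Fin n → Event n
  | crash : Fin n → Event n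
deriving DecidableEq

/-- An algorithm for `n` processes: a collection of shared objects, each with a deterministic
type and an initial value, and for each process a deterministic state machine with an initial
state depending on the process's binary input.  Each state determines the process's next step
(`pending`: an operation applied to a designated object, or `none` for a no-op); the state
reached after a step is determined by the current state and the response received (`next`).
`output i s = some v` means that `s` is an output state of process `i` for the value `v`;
processes in output states take only no-op steps. -/
structure Algorithm (n : ℕ) : Type 1 where
  ObjIdx : Type
  objType : ObjIdx → DetType
  objInit : (o : ObjIdx) → (objType o).Value
  PState : Fin n → Type
  init : (i : Fin n) → Bool → PState i
  pending : (i : Fin n) → PState i → Option ((o : ObjIdx) × (objType o).Op)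
  next : (i : Fin n) → PState i → (o : ObjIdx) → (objType o).Resp → PState i
  output : (i : Fin n) → PState i → Option Bool
  output_noop : ∀ i s, output i s ≠ none → pending i s = none

/-- A configuration assigns a state to each process and a value to each object. -/
structure Config {n : ℕ} (A : Algorithm n) : Type where
  pstate : (i : Fin n) → A.PState i
  oval : (o : A.ObjIdx) → (A.objType o).Value

variable {n : ℕ}

/-- The effect of one event on a configuration.  A crash of `p_i` resets `p_i` to its initial
state (for its input) and leaves all object values unchanged; a step of `p_i` applies its
pending operation (if any) to the designated object, receiving the response determined by the
type's transition function. -/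
noncomputable def applyEvent (A : Algorithm n) (input : Fin n → Bool) (C : Config A) :
    Event n → Config A
  | .crash i => { C with pstate := Function.update C.pstate i (A.init i (input i)) }
  | .step i =>
    letI : DecidableEq A.ObjIdx := Classical.decEq _
    match A.pending i (C.pstate i) with
    | none => C
    | some ⟨o, op⟩ =>
      { pstate := Function.update C.pstate i
          (A.next i (C.pstate i) o ((A.objType o).δ (C.oval o) op).1),
        oval := Function.update C.oval o ((A.objType o).δ (C.oval o) op).2 }

/-- Since the algorithm is deterministic, a finite execution from `C` is determined by its
schedule, i.e. its list of events; `run A input C σ` is the configuration `Cσ` reached by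
applying the events of `σ` in order from `C`. -/
noncomputable def run (A : Algorithm n) (input : Fin n → Bool) (C : Config A) :
    List (Event n) → Config A
  | [] => C
  | e :: σ => run A input (applyEvent A input C e) σ

/-- The initial configuration: every process in its initial state, every object at its
initial value. -/
def initConfig (A : Algorithm n) (input : Fin n → Bool) : Config A :=
  ⟨fun i => A.init i (input i), A.objInit⟩

/-- Process `i` has decided `v` in `Cσ`: at some point along the execution `σ` from `C`,
process `i` was in an output state for `v`. -/
def HasDecided (A : Algorithm n) (input : Fin n → Bool) (C : Config A)
    (σ : List (Event n)) (i : Fin n) (v : Bool) : Prop :=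
  ∃ τ, τ <+: σ ∧ A.output i ((run A input C τ).pstate i) = some v

def CrashFree (σ : List (Event n)) : Prop := ∀ i : Fin n, Event.crash i ∉ σ

/-- The first `k` events of an infinite execution. -/
def initSeg (e : ℕ → Event n) (k : ℕ) : List (Event n) := (List.range k).map e

/-- Agreement: in every execution no two processes decide different values. -/
def Agreement (A : Algorithm n) : Prop :=
  ∀ (input : Fin n → Bool) (σ : List (Event n)) (i j : Fin n) (v w : Bool),
    HasDecided A input (initConfig A input) σ i v →
    HasDecided A input (initConfig A input) σ j w → v = w

/-- Validity: every decided value is the input of some process. -/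
def Validity (A : Algorithm n) : Prop :=
  ∀ (input : Fin n → Bool) (σ : List (Event n)) (i : Fin n) (v : Bool),
    HasDecided A input (initConfig A input) σ i v → ∃ j, input j = v

/-- Recoverable wait-freedom: every process, starting from its initial state, either crashes
or decides within a finite number of its own steps.  Equivalently: in every infinite execution
in which process `i` starts at (or is reset by a crash to) its initial state, takes infinitely
many steps and crashes only finitely often, it eventually reaches an output state. -/
def RecWaitFree (A : Algorithm n) : Prop :=
  ∀ (input : Fin n → Bool) (C : Config A) (e : ℕ → Event n) (i : Fin n),
    (C.pstate i = A.init i (input i) ∨ ∃ k, e k = Event.crash i) →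
    (∀ m, ∃ k, m ≤ k ∧ e k = Event.step i) →
    (∃ m, ∀ k, m ≤ k → e k ≠ Event.crash i) →
    ∃ (k : ℕ) (v : Bool), A.output i ((run A input C (initSeg e k)).pstate i) = some v

/-- A recoverable wait-free binary consensus algorithm. -/
def SolvesRecConsensus (A : Algorithm n) : Prop :=
  Agreement A ∧ Validity A ∧ RecWaitFree A

/-- Agreement restricted to crash-free executions. -/
def AgreementCF (A : Algorithm n) : Prop :=
  ∀ (input : Fin n → Bool) (σ : List (Event n)), CrashFree σ →
    ∀ (i j : Fin n) (v w : Bool),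
      HasDecided A input (initConfig A input) σ i v →
      HasDecided A input (initConfig A input) σ j w → v = w

/-- Validity restricted to crash-free executions. -/
def ValidityCF (A : Algorithm n) : Prop :=
  ∀ (input : Fin n → Bool) (σ : List (Event n)), CrashFree σ →
    ∀ (i : Fin n) (v : Bool),
      HasDecided A input (initConfig A input) σ i v → ∃ j, input j = v

/-- Wait-freedom: in crash-free executions, every process that takes infinitely many steps
decides. -/
def WaitFree (A : Algorithm n) : Prop :=
  ∀ (input : Fin n → Bool) (e : ℕ → Event n),
    (∀ (k : ℕ) (i : Fin n), e k ≠ Event.crash i) →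
    ∀ i : Fin n, (∀ m, ∃ k, m ≤ k ∧ e k = Event.step i) →
    ∃ (k : ℕ) (v : Bool),
      A.output i ((run A input (initConfig A input) (initSeg e k)).pstate i) = some v

/-- A wait-free binary consensus algorithm (for the model in which crashes are permanent,
i.e. only crash-free executions are relevant). -/
def SolvesWFConsensus (A : Algorithm n) : Prop :=
  AgreementCF A ∧ ValidityCF A ∧ WaitFree A

/-- The number of crashes of process `i` in `σ`. -/
def crashCount (i : Fin n) (σ : List (Event n)) : ℕ :=
  (σ.filter fun e => decide (e = Event.crash i)).length

def isStepBelow (i : Fin n) : Event n → Bool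
  | .step j => decide (j < i)
  | .crash _ => false

/-- The total number of steps taken by processes `p_0, …, p_{i-1}` in `σ`. -/
def stepsBelow (i : Fin n) (σ : List (Event n)) : ℕ := (σ.filter (isStepBelow i)).length

/-- The crash bound: for every process `p_i`, the number of crashes of `p_i` is at most
`z·n` times the total number of steps of `p_0, …, p_{i-1}` (for `i = 0` this says that `p_0`
never crashes). -/
def EMem (z : ℕ) (σ : List (Event n)) : Prop :=
  ∀ i : Fin n, crashCount i σ ≤ z * n * stepsBelow i σ

/-- `𝓔_z`: executions satisfying the crash bound. -/
def ESet (n z : ℕ) : Set (List (Event n)) := { σ | EMem z σ }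

/-- `𝓔*_z`: executions satisfying the crash bound in every prefix. -/
def EStarSet (n z : ℕ) : Set (List (Event n)) := { σ | ∀ τ, τ <+: σ → EMem z τ }

/-- `e` is an event by a process in `P`. -/
def eventBy (P : Set (Fin n)) : Event n → Prop
  | .step i => i ∈ P
  | .crash i => i ∈ P

/-- The set of processes `P` is `v`-univalent in the execution `α` from `C` with respect to
the set of executions `𝒜`. -/
def VUnivalentIn (A : Algorithm n) (input : Fin n → Bool) (C : Config A)
    (𝒜 : Set (List (Event n))) (P : Set (Fin n)) (α : List (Event n)) (v : Bool) : Prop :=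
  α ∈ 𝒜 ∧ ∀ β : List (Event n), (∀ e ∈ β, eventBy P e) → (α ++ β) ∈ 𝒜 →
    ∀ (i : Fin n) (w : Bool), HasDecided A input C (α ++ β) i w → w = v

/-- The set of processes `P` is bivalent in the execution `α` from `C` with respect to `𝒜`. -/
def BivalentIn (A : Algorithm n) (input : Fin n → Bool) (C : Config A)
    (𝒜 : Set (List (Event n))) (P : Set (Fin n)) (α : List (Event n)) : Prop :=
  ∀ v : Bool, ∃ β : List (Event n), (∀ e ∈ β, eventBy P e) ∧ (α ++ β) ∈ 𝒜 ∧
    ∃ i : Fin n, HasDecided A input C (α ++ β) i v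

/-- `P` is univalent in `α` with respect to `𝒜`: `v`-univalent for some `v`. -/
def UnivalentIn (A : Algorithm n) (input : Fin n → Bool) (C : Config A)
    (𝒜 : Set (List (Event n))) (P : Set (Fin n)) (α : List (Event n)) : Prop :=
  ∃ v : Bool, VUnivalentIn A input C 𝒜 P α v

/-- `α ∈ 𝒜` is critical with respect to `𝒜`: `α` is bivalent with respect to `𝒜` and every
nonempty extension of `α` inside `𝒜` is univalent with respect to `𝒜`. -/
def Critical (A : Algorithm n) (input : Fin n → Bool) (C : Config A)
    (𝒜 : Set (List (Event n))) (α : List (Event n)) : Prop :=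
  α ∈ 𝒜 ∧ BivalentIn A input C 𝒜 Set.univ α ∧
  ∀ β : List (Event n), β ≠ [] → (α ++ β) ∈ 𝒜 → UnivalentIn A input C 𝒜 Set.univ (α ++ β)

/-- Process `i` is on team `v` in `Cα` (with respect to `𝒜`): `α p_i` is `v`-univalent. -/
def OnTeam (A : Algorithm n) (input : Fin n → Bool) (C : Config A)
    (𝒜 : Set (List (Event n))) (α : List (Event n)) (i : Fin n) (v : Bool) : Prop :=
  VUnivalentIn A input C 𝒜 Set.univ (α ++ [Event.step i]) v

/-- Process `i` is poised to apply an operation to object `O` in configuration `C`. -/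
def PoisedAt (A : Algorithm n) (C : Config A) (i : Fin n) (O : A.ObjIdx) : Prop :=
  ∃ op, A.pending i (C.pstate i) = some ⟨O, op⟩

/-- `σ ∈ 𝒮(P)`: a crash-free schedule in which each process of `P` takes at most one step
and no other process takes a step. -/
def IsSched (P : Set (Fin n)) (σ : List (Event n)) : Prop :=
  ∃ l : List (Fin n), l.Nodup ∧ (∀ j ∈ l, j ∈ P) ∧ σ = l.map Event.step

/-- The schedule `λ_k = c_k c_{k+1} ⋯ c_{n-1}`. -/
def lambdaSched (n k : ℕ) : List (Event n) :=
  ((List.finRange n).filter fun j => decide (k ≤ j.val)).map Event.crash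

/-- `U_v`: the set of values of object `O` reachable from `Dα` by a schedule in `𝒮(𝒫)`
whose first process is on team `v`. -/
def USetCfg (A : Algorithm n) (input : Fin n → Bool) (D : Config A)
    (𝒜 : Set (List (Event n))) (α : List (Event n)) (O : A.ObjIdx) (v : Bool) :
    Set (A.objType O).Value :=
  { w | ∃ (j : Fin n) (σ : List (Event n)), OnTeam A input D 𝒜 α j v ∧
        IsSched {k : Fin n | k ≠ j} σ ∧
        w = (run A input D (α ++ Event.step j :: σ)).oval O }

/-- The configuration `Dα` is `v`-hiding. -/
def VHiding (A : Algorithm n) (input : Fin n → Bool) (D : Config A)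
    (𝒜 : Set (List (Event n))) (α : List (Event n)) (O : A.ObjIdx) (v : Bool) : Prop :=
  USetCfg A input D 𝒜 α O false ∩ USetCfg A input D 𝒜 α O true = ∅ ∧
  (run A input D α).oval O ∈ USetCfg A input D 𝒜 α O v

/-- The configuration `Dα` is `n`-recording. -/
def NRecordingCfg (A : Algorithm n) (input : Fin n → Bool) (D : Config A)
    (𝒜 : Set (List (Event n))) (α : List (Event n)) (O : A.ObjIdx) : Prop :=
  USetCfg A input D 𝒜 α O false ∩ USetCfg A input D 𝒜 α O true = ∅ ∧
  ∀ v : Bool, (run A input D α).oval O ∈ USetCfg A input D 𝒜 α O v →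
    ∃! j : Fin n, OnTeam A input D 𝒜 α j (!v)

/-- Apply the operations `o i` of the processes listed in `σ`, in order, to an object of type
`T`, starting from the value `u`. -/
def applyOps (T : DetType) (o : Fin n → T.Op) : T.Value → List (Fin n) → T.Value
  | u, [] => u
  | u, i :: σ => applyOps T o (T.δ u (o i)).2 σ

/-- `U_x`: the set of values obtainable by applying the operations of the processes of a
duplicate-free schedule whose first process is on team `x` to an object with initial value
`u`. -/
def UVals (T : DetType) (o : Fin n → T.Op) (u : T.Value) (team : Fin n → Bool) (x : Bool) :
    Set T.Value :=
  { v | ∃ (i : Fin n) (σ : List (Fin n)), team i = x ∧ (i :: σ).Nodup ∧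
        v = applyOps T o u (i :: σ) }

/-- A deterministic type `T` is `n`-recording. -/
def NRecording (n : ℕ) (T : DetType) : Prop :=
  ∃ (u : T.Value) (team : Fin n → Bool) (o : Fin n → T.Op),
    (∀ x : Bool, ∃ i, team i = x) ∧
    (UVals T o u team false ∩ UVals T o u team true = ∅) ∧
    (∀ x : Bool, u ∈ UVals T o u team x → ∃! i, team i = !x)

end RecoverableConsensus

/-!
Appending a step of `p_i`, a crash of `p_j` with `i < j`, and enough steps of `p_j` to a member of
`𝓔*_z` stays inside `𝓔*_z`, because the step of `p_i` pays for the crash, and it makes `p_j` decide,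
because `p_j` restarts and then runs alone.  What is appended depends only on the configuration
reached, so two univalent members of `𝓔*_z` with extensions that reach the same configuration have
the same valency.

At a critical `α` both teams are nonempty.  A deciding extension of `α` can start with a crash `c_j`
only if some `p_i` with `i < j` exists; then `α c_j p_i` and `α p_i c_j` reach the same
configuration, so `p_i` is on the team given by the valency of `α c_j`.
If `p_i` and `p_j` are on opposite teams, then `α p_i p_j` and `α p_j p_i` must reach different
configurations, so the two next steps do not commute and are applied to a common object.
-/

namespace RecoverableConsensus

variable {n : ℕ} {A : Algorithm n} {input : Fin n → Bool} {C : Config A}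

lemma run_append (σ τ : List (Event n)) :
    run A input C (σ ++ τ) = run A input (run A input C σ) τ := by
  induction σ generalizing C with
  | nil => rfl
  | cons _ _ ih => exact ih

lemma PoisedAt.unique {i : Fin n} {O O' : A.ObjIdx} (h : PoisedAt A C i O)
    (h' : PoisedAt A C i O') : O = O' := by
  obtain ⟨op, h⟩ := h
  obtain ⟨op', h'⟩ := h'
  exact congrArg Sigma.fst (Option.some.inj (h.symm.trans h'))

lemma applyEvent_step_of_pending_eq_none {i : Fin n} (h : A.pending i (C.pstate i) = none) :
    applyEvent A input C (.step i) = C := by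
  simp only [applyEvent]
  rw [h]

open Classical in
lemma applyEvent_step_of_pending_eq_some {i : Fin n} {o : A.ObjIdx} {op : (A.objType o).Op}
    (h : A.pending i (C.pstate i) = some ⟨o, op⟩) :
    applyEvent A input C (.step i) =
      { pstate := Function.update C.pstate i
          (A.next i (C.pstate i) o ((A.objType o).δ (C.oval o) op).1),
        oval := Function.update C.oval o ((A.objType o).δ (C.oval o) op).2 } := by
  simp only [applyEvent]
  rw [h]

lemma applyEvent_step_pstate_of_ne {i j : Fin n} (hij : i ≠ j) :
    (applyEvent A input C (.step i)).pstate j = C.pstate j := by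
  rcases h : A.pending i (C.pstate i) with _ | ⟨o, op⟩
  · rw [applyEvent_step_of_pending_eq_none h]
  · rw [applyEvent_step_of_pending_eq_some h]
    exact Function.update_of_ne hij.symm _ _

lemma applyEvent_crash_pstate_of_ne {i j : Fin n} (hij : i ≠ j) :
    (applyEvent A input C (.crash i)).pstate j = C.pstate j :=
  Function.update_of_ne hij.symm _ _

lemma applyEvent_step_crash_comm {i j : Fin n} (hij : i ≠ j) :
    applyEvent A input (applyEvent A input C (.step i)) (.crash j) =
      applyEvent A input (applyEvent A input C (.crash j)) (.step i) := by
  have hi : (applyEvent A input C (.crash j)).pstate i = C.pstate i :=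
    applyEvent_crash_pstate_of_ne hij.symm
  rcases h : A.pending i (C.pstate i) with _ | ⟨o, op⟩
  · rw [applyEvent_step_of_pending_eq_none h,
      applyEvent_step_of_pending_eq_none ((congrArg _ hi).trans h)]
  · rw [applyEvent_step_of_pending_eq_some h,
      applyEvent_step_of_pending_eq_some ((congrArg _ hi).trans h)]
    simp only [applyEvent, Function.update_of_ne hij]
    rw [Function.update_comm hij]

open Classical in
lemma applyEvent_step_step_comm {i j : Fin n} (hij : i ≠ j)
    (hO : ∀ O, PoisedAt A C i O → ¬ PoisedAt A C j O) :
    applyEvent A input (applyEvent A input C (.step i)) (.step j) =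
      applyEvent A input (applyEvent A input C (.step j)) (.step i) := by
  have hi : (applyEvent A input C (.step j)).pstate i = C.pstate i :=
    applyEvent_step_pstate_of_ne hij.symm
  have hj : (applyEvent A input C (.step i)).pstate j = C.pstate j :=
    applyEvent_step_pstate_of_ne hij
  rcases h : A.pending i (C.pstate i) with _ | ⟨o, op⟩
  · rw [applyEvent_step_of_pending_eq_none h,
      applyEvent_step_of_pending_eq_none ((congrArg _ hi).trans h)]
  rcases h' : A.pending j (C.pstate j) with _ | ⟨o', op'⟩
  · rw [applyEvent_step_of_pending_eq_none h',
      applyEvent_step_of_pending_eq_none ((congrArg _ hj).trans h')]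
  have hoo' : o ≠ o' := by
    rintro rfl
    exact hO o ⟨op, h⟩ ⟨op', h'⟩
  rw [applyEvent_step_of_pending_eq_some ((congrArg _ hj).trans h'),
    applyEvent_step_of_pending_eq_some ((congrArg _ hi).trans h),
    applyEvent_step_of_pending_eq_some h, applyEvent_step_of_pending_eq_some h']
  simp only [Function.update_of_ne hij, Function.update_of_ne hij.symm,
    Function.update_of_ne hoo', Function.update_of_ne hoo'.symm]
  rw [Function.update_comm hij, Function.update_comm hoo']

section CrashBound

variable {z : ℕ} {σ τ : List (Event n)}

lemma EMem.concat_step (hσ : EMem z σ) (i : Fin n) : EMem z (σ ++ [.step i]) := by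
  intro k
  calc crashCount k (σ ++ [.step i])
    _ = crashCount k σ := by simp [crashCount]
    _ ≤ z * n * stepsBelow k σ := hσ k
    _ ≤ z * n * stepsBelow k (σ ++ [.step i]) := by
      gcongr
      exact ((List.sublist_append_left σ _).filter _).length_le

lemma EMem.concat_step_concat_crash (hz : 1 ≤ z) (hσ : EMem z σ) {i j : Fin n} (hij : i < j) :
    EMem z (σ ++ [.step i] ++ [.crash j]) := by
  intro k
  have hsteps : stepsBelow k (σ ++ [.step i] ++ [.crash j]) = stepsBelow k (σ ++ [.step i]) := by
    rw [stepsBelow, List.filter_append]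
    simp [stepsBelow, isStepBelow]
  rw [hsteps]
  rcases eq_or_ne j k with rfl | hjk
  · have hzn : 1 ≤ z * n := Nat.mul_pos hz i.pos
    calc crashCount j (σ ++ [.step i] ++ [.crash j])
      _ = crashCount j σ + 1 := by simp [crashCount]
      _ ≤ z * n * stepsBelow j σ + z * n := Nat.add_le_add (hσ j) hzn
      _ = z * n * stepsBelow j (σ ++ [.step i]) := by
        simp [stepsBelow, isStepBelow, hij, Nat.mul_succ]
  · have hcrashes : crashCount k (σ ++ [.step i] ++ [.crash j]) =
        crashCount k (σ ++ [.step i]) := by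
      simp [crashCount, hjk]
    rw [hcrashes]
    exact hσ.concat_step i k

lemma EMem.exists_lt_of_crash_mem (hσ : EMem z σ) {j : Fin n} (hj : .crash j ∈ σ) :
    ∃ i < j, .step i ∈ σ := by
  have hcrash : 0 < crashCount j σ :=
    List.length_pos_of_mem (List.mem_filter.2 ⟨hj, decide_eq_true rfl⟩)
  have hstep : 0 < stepsBelow j σ := Nat.pos_of_mul_pos_left (hcrash.trans_le (hσ j))
  obtain ⟨e, he⟩ := List.exists_mem_of_length_pos hstep
  obtain ⟨heσ, hej⟩ := List.mem_filter.1 he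
  cases e with
  | step i => exact ⟨i, of_decide_eq_true hej, heσ⟩
  | crash i => exact absurd hej Bool.false_ne_true

lemma mem_eStarSet_of_prefix (hσ : σ ∈ EStarSet n z) (h : τ <+: σ) : τ ∈ EStarSet n z :=
  fun _ hρ => hσ _ (hρ.trans h)

lemma concat_mem_eStarSet {e : Event n} (hσ : σ ∈ EStarSet n z) (he : EMem z (σ ++ [e])) :
    σ ++ [e] ∈ EStarSet n z := by
  intro τ hτ
  rcases List.prefix_concat_iff.1 hτ with rfl | hτσ
  · exact he
  · exact hσ _ hτσ

lemma concat_step_mem_eStarSet (hσ : σ ∈ EStarSet n z) (i : Fin n) :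
    σ ++ [.step i] ∈ EStarSet n z :=
  concat_mem_eStarSet hσ ((hσ σ List.prefix_rfl).concat_step i)

lemma append_replicate_step_mem_eStarSet (hσ : σ ∈ EStarSet n z) (i : Fin n) (k : ℕ) :
    σ ++ List.replicate k (.step i) ∈ EStarSet n z := by
  induction k with
  | zero => rwa [List.replicate_zero, List.append_nil]
  | succ k ih =>
    rw [List.replicate_succ', ← List.append_assoc]
    exact concat_step_mem_eStarSet ih i

lemma concat_step_concat_crash_mem_eStarSet (hz : 1 ≤ z) (hσ : σ ∈ EStarSet n z) {i j : Fin n}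
    (hij : i < j) : σ ++ [.step i] ++ [.crash j] ∈ EStarSet n z :=
  concat_mem_eStarSet (concat_step_mem_eStarSet hσ i)
    ((hσ σ List.prefix_rfl).concat_step_concat_crash hz hij)

end CrashBound

/-- Recoverable obstruction-freedom: a process that runs alone from its initial state decides,
whatever the states of the other processes and the values of the objects.  It is the part of
recoverable wait-freedom that concerns solo executions. -/
def RecObstructionFree (A : Algorithm n) : Prop :=
  ∀ (input : Fin n → Bool) (C : Config A) (i : Fin n), C.pstate i = A.init i (input i) →
    ∃ (k : ℕ) (v : Bool),
      A.output i ((run A input C (List.replicate k (.step i))).pstate i) = some v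

lemma RecWaitFree.recObstructionFree (hA : RecWaitFree A) : RecObstructionFree A := by
  intro input C i hi
  obtain ⟨k, v, hv⟩ := hA input C (fun _ => .step i) i (Or.inl hi) (fun m => ⟨m, le_rfl, rfl⟩)
    ⟨0, fun _ _ => nofun⟩
  have hsolo : initSeg (fun _ => Event.step i) k = List.replicate k (.step i) := by
    simp [initSeg]
  exact ⟨k, v, hsolo ▸ hv⟩

lemma HasDecided.mono {σ τ : List (Event n)} {i : Fin n} {v : Bool}
    (h : HasDecided A input C σ i v) (hστ : σ <+: τ) : HasDecided A input C τ i v := by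
  obtain ⟨ρ, hρ, hv⟩ := h
  exact ⟨ρ, hρ.trans hστ, hv⟩

lemma VUnivalentIn.eq_of_hasDecided {𝒜 : Set (List (Event n))} {σ β : List (Event n)} {i : Fin n}
    {v w : Bool} (hσ : VUnivalentIn A input C 𝒜 Set.univ σ v) (hβ : σ ++ β ∈ 𝒜)
    (hw : HasDecided A input C (σ ++ β) i w) : w = v :=
  hσ.2 β (fun e _ => by cases e <;> trivial) hβ i w hw

variable {z : ℕ}

lemma exists_deciding_extension (hA : RecObstructionFree A) (hz : 1 ≤ z) {i j : Fin n}
    (hij : i < j) (D : Config A) :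
    ∃ (β : List (Event n)) (v : Bool), ∀ (C : Config A), ∀ σ ∈ EStarSet n z,
      run A input C σ = D → σ ++ β ∈ EStarSet n z ∧ HasDecided A input C (σ ++ β) j v := by
  obtain ⟨k, v, hv⟩ := hA input (run A input D [.step i, .crash j]) j
    (Function.update_self _ _ _)
  refine ⟨[.step i] ++ [.crash j] ++ List.replicate k (.step j), v, fun C σ hσ hD => ⟨?_, ?_⟩⟩
  · simpa only [List.append_assoc] using append_replicate_step_mem_eStarSet
      (concat_step_concat_crash_mem_eStarSet hz hσ hij) j k
  · refine ⟨_, List.prefix_rfl, ?_⟩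
    rw [run_append, hD, run_append]
    exact hv

lemma valency_eq_of_run_eq (hA : RecObstructionFree A) (hn : 2 ≤ n) (hz : 1 ≤ z)
    {σ τ σ' τ' : List (Event n)} {v w : Bool}
    (hσ : VUnivalentIn A input C (EStarSet n z) Set.univ σ v)
    (hτ : VUnivalentIn A input C (EStarSet n z) Set.univ τ w)
    (hσ' : σ ++ σ' ∈ EStarSet n z) (hτ' : τ ++ τ' ∈ EStarSet n z)
    (hrun : run A input C (σ ++ σ') = run A input C (τ ++ τ')) : v = w := by
  have : Nontrivial (Fin n) := Fin.nontrivial_iff_two_le.2 hn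
  obtain ⟨i, j, hij⟩ := exists_pair_lt (Fin n)
  obtain ⟨β, u, hβ⟩ := exists_deciding_extension (input := input) hA hz hij
    (run A input C (σ ++ σ'))
  obtain ⟨hσβ, huσ⟩ := hβ C _ hσ' rfl
  obtain ⟨hτβ, huτ⟩ := hβ C _ hτ' hrun.symm
  rw [List.append_assoc] at hσβ huσ hτβ huτ
  exact (hσ.eq_of_hasDecided hσβ huσ).symm.trans (hτ.eq_of_hasDecided hτβ huτ)

lemma exists_poisedAt_of_onTeam_ne (hA : RecObstructionFree A) (hn : 2 ≤ n) (hz : 1 ≤ z)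
    {α : List (Event n)} {i j : Fin n} {v w : Bool} (hvw : v ≠ w)
    (hi : OnTeam A input C (EStarSet n z) α i v) (hj : OnTeam A input C (EStarSet n z) α j w) :
    ∃ O, PoisedAt A (run A input C α) i O ∧ PoisedAt A (run A input C α) j O := by
  have hij : i ≠ j := by
    rintro rfl
    exact hvw (valency_eq_of_run_eq hA hn hz hi hj (concat_step_mem_eStarSet hi.1 i)
      (concat_step_mem_eStarSet hj.1 i) rfl)
  by_contra! hO
  refine hvw (valency_eq_of_run_eq hA hn hz hi hj (concat_step_mem_eStarSet hi.1 j)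
    (concat_step_mem_eStarSet hj.1 i) ?_)
  simp only [run_append]
  exact applyEvent_step_step_comm (input := input) hij hO

namespace Critical

variable {α : List (Event n)}

lemma exists_valency (hcrit : Critical A input C (EStarSet n z) α) (i : Fin n) :
    ∃ v, OnTeam A input C (EStarSet n z) α i v :=
  hcrit.2.2 [.step i] (List.cons_ne_nil _ _) (concat_step_mem_eStarSet hcrit.1 i)

lemma onTeam_of_hasDecided (hcrit : Critical A input C (EStarSet n z) α) {i : Fin n} {v : Bool}
    (hv : HasDecided A input C α i v) (j : Fin n) : OnTeam A input C (EStarSet n z) α j v := by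
  obtain ⟨w, hw⟩ := hcrit.exists_valency j
  obtain rfl : v = w := hw.eq_of_hasDecided (β := []) (by simpa using hw.1)
    (by simpa using hv.mono (List.prefix_append α [.step j]))
  exact hw

lemma onTeam_of_crash (hcrit : Critical A input C (EStarSet n z) α) (hA : RecObstructionFree A)
    (hn : 2 ≤ n) (hz : 1 ≤ z) {i j : Fin n} (hij : i < j) {v : Bool}
    (hj : VUnivalentIn A input C (EStarSet n z) Set.univ (α ++ [.crash j]) v) :
    OnTeam A input C (EStarSet n z) α i v := by
  obtain ⟨w, hw⟩ := hcrit.exists_valency i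
  obtain rfl : w = v := by
    refine valency_eq_of_run_eq hA hn hz hw hj
      (concat_step_concat_crash_mem_eStarSet hz hcrit.1 hij) (concat_step_mem_eStarSet hj.1 i) ?_
    simp only [run_append]
    exact applyEvent_step_crash_comm hij.ne
  exact hw

lemma exists_onTeam (hcrit : Critical A input C (EStarSet n z) α) (hA : RecObstructionFree A)
    (hn : 2 ≤ n) (hz : 1 ≤ z) (v : Bool) : ∃ i, OnTeam A input C (EStarSet n z) α i v := by
  obtain ⟨β, -, hβ, i, hi⟩ := hcrit.2.1 v
  rcases β with _ | ⟨e, β⟩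
  · rw [List.append_nil] at hi
    exact ⟨i, hcrit.onTeam_of_hasDecided hi i⟩
  rw [List.append_cons] at hβ hi
  have he : α ++ [e] ∈ EStarSet n z := mem_eStarSet_of_prefix hβ (List.prefix_append _ _)
  obtain ⟨w, hw⟩ := hcrit.2.2 [e] (List.cons_ne_nil _ _) he
  obtain rfl : v = w := hw.eq_of_hasDecided hβ hi
  cases e with
  | step j => exact ⟨j, hw⟩
  | crash j =>
    obtain ⟨k, hkj, -⟩ := (he _ List.prefix_rfl).exists_lt_of_crash_mem (List.mem_concat_self ..)
    exact ⟨k, hcrit.onTeam_of_crash hA hn hz hkj hw⟩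

end Critical

end RecoverableConsensus

open RecoverableConsensus in
theorem all_poised_at_same_object_general {n : ℕ} (hn : 2 ≤ n) {A : Algorithm n}
    (hA : RecObstructionFree A) {input : Fin n → Bool} {C : Config A} {z : ℕ} (hz : 1 ≤ z)
    {α : List (Event n)} (hcrit : Critical A input C (EStarSet n z) α) :
    ∃ O : A.ObjIdx, ∀ i : Fin n, PoisedAt A (run A input C α) i O := by
  choose rep hrep using hcrit.exists_onTeam hA hn hz
  obtain ⟨O, hfalse, htrue⟩ :=
    exists_poisedAt_of_onTeam_ne hA hn hz Bool.false_ne_true (hrep false) (hrep true)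
  have hO : ∀ v, PoisedAt A (run A input C α) (rep v) O := Bool.forall_bool.2 ⟨hfalse, htrue⟩
  refine ⟨O, fun i => ?_⟩
  obtain ⟨v, hv⟩ := hcrit.exists_valency i
  obtain ⟨O', hi, hO'⟩ :=
    exists_poisedAt_of_onTeam_ne hA hn hz (Bool.not_ne_self v).symm hv (hrep !v)
  rwa [hO'.unique (hO !v)] at hi

open RecoverableConsensus in
/-- In the critical-execution setting, every process is poised to apply an
operation to the same object in `Cα`. -/
theorem all_poised_at_same_object
    (n : ℕ) (hn : 2 ≤ n) (A : Algorithm n) (hA : SolvesRecConsensus A)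
    (input : Fin n → Bool) (C : Config A) (z : ℕ) (hz : 1 ≤ z)
    (α : List (Event n)) (hα : α ∈ EStarSet n z)
    (hcrit : Critical A input C (EStarSet n z) α) :
    ∃ O : A.ObjIdx, ∀ i : Fin n, PoisedAt A (run A input C α) i O :=
  all_poised_at_same_object_general hn hA.2.2.recObstructionFree hz hcrit
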